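/- arXiv:2409.02400 — 6 statements merged into one kernel-verified Lean document; each statement's English description precedes it below -/
import Mathlib

section
/- Fix ε > 0, δ > 0, a ∈ ℝ. Let (u, p, v, q) : ℝ → ℝ⁴ be differentiable and satisfy the spatial ODE system δ u'(x) = p(x), δ p'(x) = f(u(x)) − v(x), v'(x) = q(x), q'(x) = ε(u(x) − a) for all x. Then the quantity G(u(x), p(x), v(x), q(x)) := (ε/2)p(x)² − (1/2)q(x)² − ε( f̃(u(x)) + (a − u(x)) v(x) ) is constant in x; i.e., G is a first integral of the spatial ODE system. -/
/-! Multiplying `δp' = f(u) - v` by `u'` and using `δu' = p` gives `pp' = u'(f(u) - v)`, while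
multiplying `q' = ε(u - a)` by `v' = q` gives `qq' = ε(u - a)v'`. Hence
`(ε/2 p² - 1/2 q²)' = ε(u'(f(u) - v) + (a - u)v')`, and the right-hand side is the derivative of
`ε(F(u) + (a - u)v)` for any antiderivative `F` of `f`. -/

/-- The spatial ODE system `δu' = p`, `δp' = f(u) - v`, `v' = q`, `q' = ε(u - a)` with an arbitrary
nonlinearity `f`. Differentiability is a separate requirement because `deriv` is `0` where the
derivative does not exist. -/
structure IsSpatialSolution {𝕜 : Type*} [NontriviallyNormedField 𝕜] (ε δ a : 𝕜) (f : 𝕜 → 𝕜)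
    (u p v q : 𝕜 → 𝕜) : Prop where
  differentiable_u : Differentiable 𝕜 u
  differentiable_p : Differentiable 𝕜 p
  differentiable_v : Differentiable 𝕜 v
  differentiable_q : Differentiable 𝕜 q
  deriv_u : ∀ x, δ * deriv u x = p x
  deriv_p : ∀ x, δ * deriv p x = f (u x) - v x
  deriv_v : ∀ x, deriv v x = q x
  deriv_q : ∀ x, deriv q x = ε * (u x - a)

/-- The function `G(u, p, v, q)` on phase space that is conserved by the spatial ODE system, where
`F` is an antiderivative of the nonlinearity, `f̃` in the case of the cubic. -/
def spatialFirstIntegral {𝕜 : Type*} [Field 𝕜] (ε a : 𝕜) (F : 𝕜 → 𝕜) (u p v q : 𝕜) : 𝕜 :=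
  (ε / 2) * p ^ 2 - (1 / 2) * q ^ 2 - ε * (F u + (a - u) * v)

section NontriviallyNormedField

variable {𝕜 : Type*} [NontriviallyNormedField 𝕜] {ε δ a : 𝕜} {f F u p v q : 𝕜 → 𝕜}

theorem hasDerivAt_spatialFirstIntegral [NeZero (2 : 𝕜)] {x F' u' p' v' q' : 𝕜}
    (hF : HasDerivAt F F' (u x)) (hu : HasDerivAt u u' x) (hp : HasDerivAt p p' x)
    (hv : HasDerivAt v v' x) (hq : HasDerivAt q q' x) :
    HasDerivAt (fun x => spatialFirstIntegral ε a F (u x) (p x) (v x) (q x))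
      (ε * (p x * p') - q x * q' - ε * (u' * (F' - v x) + (a - u x) * v')) x := by
  have kinetic := ((hp.fun_pow 2).const_mul (ε / 2)).fun_sub ((hq.fun_pow 2).const_mul (1 / 2))
  have potential := ((hF.comp x hu).fun_add ((hu.const_sub a).fun_mul hv)).const_mul ε
  refine (kinetic.fun_sub potential).congr_deriv ?_
  field_simp
  ring

namespace IsSpatialSolution

theorem p_mul_deriv_p (h : IsSpatialSolution ε δ a f u p v q) (x : 𝕜) :
    p x * deriv p x = deriv u x * (f (u x) - v x) := by
  rw [← h.deriv_u x, ← h.deriv_p x]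
  ring

theorem q_mul_deriv_q (h : IsSpatialSolution ε δ a f u p v q) (x : 𝕜) :
    q x * deriv q x = ε * (u x - a) * deriv v x := by
  rw [h.deriv_q x, h.deriv_v x, mul_comm]

theorem hasDerivAt_spatialFirstIntegral_zero [NeZero (2 : 𝕜)]
    (h : IsSpatialSolution ε δ a f u p v q) (hF : ∀ s, HasDerivAt F (f s) s) (x : 𝕜) :
    HasDerivAt (fun x => spatialFirstIntegral ε a F (u x) (p x) (v x) (q x)) 0 x := by
  refine (hasDerivAt_spatialFirstIntegral (hF (u x)) (h.differentiable_u x).hasDerivAt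
    (h.differentiable_p x).hasDerivAt (h.differentiable_v x).hasDerivAt
    (h.differentiable_q x).hasDerivAt).congr_deriv ?_
  rw [h.p_mul_deriv_p, h.q_mul_deriv_q]
  ring

end IsSpatialSolution

theorem hasDerivAt_quartic_sub_quadratic [CharZero 𝕜] (s : 𝕜) :
    HasDerivAt (fun s : 𝕜 => s ^ 4 / 12 - s ^ 2 / 2) (s ^ 3 / 3 - s) s := by
  refine (((hasDerivAt_pow 4 s).div_const 12).fun_sub
    ((hasDerivAt_pow 2 s).div_const 2)).congr_deriv ?_
  push_cast
  ring

end NontriviallyNormedField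

theorem first_integral_spatial_ODE_general {𝕜 : Type*} [RCLike 𝕜] {ε δ a : 𝕜}
    {f F u p v q : 𝕜 → 𝕜} (hF : ∀ s, HasDerivAt F (f s) s)
    (h : IsSpatialSolution ε δ a f u p v q) (x y : 𝕜) :
    spatialFirstIntegral ε a F (u x) (p x) (v x) (q x) =
      spatialFirstIntegral ε a F (u y) (p y) (v y) (q y) :=
  have hG := h.hasDerivAt_spatialFirstIntegral_zero hF
  is_const_of_deriv_eq_zero (fun z => (hG z).differentiableAt) (fun z => (hG z).deriv) x y

/-- The quantity `G(u,p,v,q) = (ε/2)p² - (1/2)q² - ε(f̃(u) + (a-u)v)`, with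
`f̃(u) = u⁴/12 - u²/2`, is a first integral of the spatial ODE system
`δu' = p, δp' = f(u) - v, v' = q, q' = ε(u - a)` where `f(u) = u³/3 - u`. -/
theorem first_integral_spatial_ODE (ε δ a : ℝ) (hε : 0 < ε) (hδ : 0 < δ)
    (u p v q : ℝ → ℝ)
    (hu : Differentiable ℝ u) (hp : Differentiable ℝ p)
    (hv : Differentiable ℝ v) (hq : Differentiable ℝ q)
    (h1 : ∀ x, δ * deriv u x = p x)
    (h2 : ∀ x, δ * deriv p x = (u x ^ 3 / 3 - u x) - v x)
    (h3 : ∀ x, deriv v x = q x)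
    (h4 : ∀ x, deriv q x = ε * (u x - a)) :
    ∀ x y : ℝ,
      (ε / 2) * p x ^ 2 - (1 / 2) * q x ^ 2
          - ε * ((u x ^ 4 / 12 - u x ^ 2 / 2) + (a - u x) * v x)
        = (ε / 2) * p y ^ 2 - (1 / 2) * q y ^ 2
          - ε * ((u y ^ 4 / 12 - u y ^ 2 / 2) + (a - u y) * v y) := by
  exact first_integral_spatial_ODE_general hasDerivAt_quartic_sub_quadratic
    ⟨hu, hp, hv, hq, h1, h2, h3, h4⟩
end

section
/- Let f(u) = u³/3 − u and fix v ∈ (0, 2/3). Suppose u₋ < −1 < u₀ < 1 < u₊ are real numbers with f(u₋) = f(u₀) = f(u₊) = v. Then, with h(u) := H_fast(u, 0; v) = u v − u⁴/12 + u²/2, one has h(u₊) > h(u₋) > h(u₀), and there exists u* ∈ (u₀, u₊) such that h(u*) = h(u₋). (This is the key step proving that for each v ∈ (0, 2/3) the planar Hamiltonian fast system has an orbit homoclinic to the saddle (u₋, 0), connecting (u₋, 0) to (u*, 0) and back.) -/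
/-!
If `f a = f b = v`, then `h b - h a = ∫ (v - f)` over `[a, b]` is the error of the trapezoidal rule
for the cubic `f` on `[a, b]`, namely `(b - a)³ f''((a + b) / 2) / 12 = (b - a)³ (a + b) / 12`.
Hence the values of `h` at two equilibria are ordered by the sign of the sum of the equilibria.
Clearly `u₋ + u₀ < 0`, while `u₋ + u₊ > 0` because `f` is odd, increasing on `[1, ∞)`, and
`f (-u₋) = -v < v = f u₊`. The point `u*` comes from the intermediate value theorem.
-/

namespace FastSystem

section Field

variable {K : Type*} [Field K]

/-- The cubic `f` whose level set `f u = v` gives the equilibria of the fast system. -/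
def cubic (u : K) : K := u ^ 3 / 3 - u

/-- The energy `h u = H_fast(u, 0; v)` of the fast system on the axis `p = 0`, for the slow
parameter `v`. -/
def axisEnergy (v u : K) : K := u * v - u ^ 4 / 12 + u ^ 2 / 2

theorem cubic_neg (u : K) : cubic (-u) = -cubic u := by
  unfold cubic
  ring

theorem axisEnergy_sub_axisEnergy [CharZero K] {v a b : K}
    (ha : cubic a = v) (hb : cubic b = v) :
    axisEnergy v b - axisEnergy v a = (b - a) ^ 3 * (a + b) / 12 := by
  unfold cubic at ha hb
  unfold axisEnergy
  linear_combination -(b - a) / 2 * (ha + hb)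

theorem continuous_axisEnergy [TopologicalSpace K] [IsTopologicalRing K] (v : K) :
    Continuous (axisEnergy v) := by
  unfold axisEnergy
  fun_prop

end Field

section OrderedField

variable {K : Type*} [Field K] [LinearOrder K] [IsStrictOrderedRing K]

theorem cubic_strictMonoOn_Ici_one : StrictMonoOn (cubic : K → K) (Set.Ici 1) := by
  intro a (ha : 1 ≤ a) b (hb : 1 ≤ b) hab
  have factored : cubic b - cubic a = (b - a) * (a ^ 2 + a * b + b ^ 2 - 3) / 3 := by
    unfold cubic
    ring
  have quadratic_pos : 0 < a ^ 2 + a * b + b ^ 2 - 3 := by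
    nlinarith
  rw [← sub_pos, factored]
  exact div_pos (mul_pos (sub_pos.2 hab) quadratic_pos) three_pos

theorem cubic_add_cubic_pos_iff {a b : K} (ha : a ≤ -1) (hb : 1 ≤ b) :
    0 < cubic a + cubic b ↔ 0 < a + b := by
  have ha_neg : -a ∈ Set.Ici (1 : K) := le_neg.2 ha
  rw [← neg_lt_iff_pos_add', ← cubic_neg, cubic_strictMonoOn_Ici_one.lt_iff_lt ha_neg hb,
    neg_lt_iff_pos_add']

theorem axisEnergy_lt_iff_add_pos {v a b : K} (hab : a < b)
    (ha : cubic a = v) (hb : cubic b = v) :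
    axisEnergy v a < axisEnergy v b ↔ 0 < a + b := by
  rw [← sub_pos, axisEnergy_sub_axisEnergy ha hb, div_pos_iff_of_pos_right (by norm_num),
    mul_pos_iff_of_pos_left (pow_pos (sub_pos.2 hab) 3)]

theorem axisEnergy_lt_iff_add_neg {v a b : K} (hab : a < b)
    (ha : cubic a = v) (hb : cubic b = v) :
    axisEnergy v b < axisEnergy v a ↔ a + b < 0 := by
  rw [← sub_neg, axisEnergy_sub_axisEnergy ha hb, div_lt_iff₀ (by norm_num), zero_mul,
    ← smul_eq_mul, smul_neg_iff_of_pos_left (pow_pos (sub_pos.2 hab) 3)]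

end OrderedField

end FastSystem

open FastSystem

/-- Key step in the existence of fast homoclinics: for `v ∈ (0, 2/3)` and roots
`u₋ < -1 < u₀ < 1 < u₊` of `f(u) = v` (with `f(u) = u³/3 - u`), the function
`h(u) = H_fast(u,0;v) = uv - u⁴/12 + u²/2` satisfies `h(u₊) > h(u₋) > h(u₀)` and
there is `u* ∈ (u₀, u₊)` with `h(u*) = h(u₋)`. -/
theorem fast_homoclinic_key (v um u0 up : ℝ)
    (hv : v ∈ Set.Ioo (0 : ℝ) (2/3))
    (h1 : um < -1) (h2 : -1 < u0) (h3 : u0 < 1) (h4 : 1 < up)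
    (fm : um ^ 3 / 3 - um = v) (f0 : u0 ^ 3 / 3 - u0 = v) (fp : up ^ 3 / 3 - up = v) :
    let h : ℝ → ℝ := fun u => u * v - u ^ 4 / 12 + u ^ 2 / 2
    h up > h um ∧ h um > h u0 ∧ ∃ us ∈ Set.Ioo u0 up, h us = h um := by
  intro h
  have cubic_sum_pos : 0 < cubic um + cubic up := by
    unfold cubic
    linarith [hv.1]
  have hm_lt_hp : h um < h up :=
    (axisEnergy_lt_iff_add_pos (by linarith) fm fp).2
      ((cubic_add_cubic_pos_iff h1.le h4.le).1 cubic_sum_pos)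
  have h0_lt_hm : h u0 < h um :=
    (axisEnergy_lt_iff_add_neg (by linarith) fm f0).2 (by linarith)
  exact ⟨hm_lt_hp, h0_lt_hm,
    intermediate_value_Ioo (h3.trans h4).le (continuous_axisEnergy v).continuousOn
      ⟨h0_lt_hm, hm_lt_hp⟩⟩
end

section
/- Let f(u) = u³/3 − u. (i) For every v ∈ (0, 2/3): if u > 1 and f(u) = v then H_fast(u, 0; v) > 3/4, while if u < −1 and f(u) = v then H_fast(u, 0; v) < 3/4. (ii) For every v ∈ (−2/3, 0): if u > 1 and f(u) = v then H_fast(u, 0; v) < 3/4, while if u < −1 and f(u) = v then H_fast(u, 0; v) > 3/4. (This shows that for v ≠ 0 near zero the two saddles of the fast system lie on different level sets of H_fast, with the ordering switching sign across v = 0, which yields the transversality of the intersections W^u(S_s^−) ∩ W^s(S_s^+) and W^u(S_s^+) ∩ W^s(S_s^−) in the plane {v = 0}.) -/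
/-!
Every equilibrium `(u, 0)` of the layer problem satisfies `v = f(u) = u(u² - 3)/3`, so that both
`uv = (u²/3)(u² - 3)` and `H_fast(u, 0; v) - 3/4 = ((u² + 1)/4)(u² - 3)` take their sign from
`u² - 3`. Hence, for `u ≠ 0`, the level of the equilibrium is above or below `3/4` according to
whether `u` and `v` have equal or opposite signs.
-/

section LayerProblem

variable {K : Type*} [Field K]

/-- The nonlinearity `f` of the layer problem `u_y = p`, `p_y = f(u) - v`; its graph `v = f(u)` is
the critical manifold. -/
def fastForce (u : K) : K :=
  u ^ 3 / 3 - u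

/-- The Hamiltonian `H_fast(u, 0; v)` of the layer problem, restricted to the line `p = 0` that
contains all equilibria. -/
def fastEnergy (u v : K) : K :=
  -(u ^ 4 / 12 - u ^ 2 / 2) + u * v

theorem mul_fastForce [CharZero K] (u : K) : u * fastForce u = u ^ 2 / 3 * (u ^ 2 - 3) := by
  unfold fastForce
  ring

theorem fastEnergy_fastForce_sub_three_fourths [CharZero K] (u : K) :
    fastEnergy u (fastForce u) - 3 / 4 = (u ^ 2 + 1) / 4 * (u ^ 2 - 3) := by
  unfold fastEnergy fastForce
  ring

variable [LinearOrder K] [IsStrictOrderedRing K]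

theorem mul_fastForce_pos_iff {u : K} (hu : u ≠ 0) : 0 < u * fastForce u ↔ 3 < u ^ 2 := by
  rw [mul_fastForce, mul_pos_iff_of_pos_left (by positivity), sub_pos]

theorem mul_fastForce_neg_iff {u : K} (hu : u ≠ 0) : u * fastForce u < 0 ↔ u ^ 2 < 3 := by
  rw [mul_fastForce, ← smul_eq_mul, smul_neg_iff_of_pos_left (by positivity), sub_neg]

theorem three_fourths_lt_fastEnergy_fastForce_iff {u : K} :
    3 / 4 < fastEnergy u (fastForce u) ↔ 3 < u ^ 2 := by
  rw [← sub_pos, fastEnergy_fastForce_sub_three_fourths, mul_pos_iff_of_pos_left (by positivity),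
    sub_pos]

theorem fastEnergy_fastForce_lt_three_fourths_iff {u : K} :
    fastEnergy u (fastForce u) < 3 / 4 ↔ u ^ 2 < 3 := by
  rw [← sub_neg, fastEnergy_fastForce_sub_three_fourths, ← smul_eq_mul,
    smul_neg_iff_of_pos_left (by positivity), sub_neg]

theorem saddle_level_splitting_general {u v : K} (hu : u ≠ 0) (huv : fastForce u = v) :
    (3 / 4 < fastEnergy u v ↔ 0 < u * v) ∧ (fastEnergy u v < 3 / 4 ↔ u * v < 0) := by
  subst huv
  exact ⟨three_fourths_lt_fastEnergy_fastForce_iff.trans (mul_fastForce_pos_iff hu).symm,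
    fastEnergy_fastForce_lt_three_fourths_iff.trans (mul_fastForce_neg_iff hu).symm⟩

end LayerProblem

/-- For `0 < v < 2/3`, the right saddle of the fast system (root of `f(u) = v` with
`u > 1`) lies above the level `H_fast = 3/4` while the left saddle (root with `u < -1`)
lies below it; for `-2/3 < v < 0` the ordering is reversed.  Here
`H_fast(u,0;v) = -(u⁴/12 - u²/2) + uv`. -/
theorem saddle_level_splitting :
    (∀ v ∈ Set.Ioo (0 : ℝ) (2/3), ∀ u : ℝ,
      (1 < u → u ^ 3 / 3 - u = v → -(u ^ 4 / 12 - u ^ 2 / 2) + u * v > 3/4) ∧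
      (u < -1 → u ^ 3 / 3 - u = v → -(u ^ 4 / 12 - u ^ 2 / 2) + u * v < 3/4)) ∧
    (∀ v ∈ Set.Ioo (-(2/3) : ℝ) 0, ∀ u : ℝ,
      (1 < u → u ^ 3 / 3 - u = v → -(u ^ 4 / 12 - u ^ 2 / 2) + u * v < 3/4) ∧
      (u < -1 → u ^ 3 / 3 - u = v → -(u ^ 4 / 12 - u ^ 2 / 2) + u * v > 3/4)) := by
  have pos {u : ℝ} (hu : 1 < u) : 0 < u := one_pos.trans hu
  have neg {u : ℝ} (hu : u < -1) : u < 0 := hu.trans neg_one_lt_zero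
  refine ⟨fun v ⟨hv, _⟩ u => ⟨fun hu huv => ?_, fun hu huv => ?_⟩,
    fun v ⟨_, hv⟩ u => ⟨fun hu huv => ?_, fun hu huv => ?_⟩⟩
  · exact (saddle_level_splitting_general (pos hu).ne' huv).1.2 (mul_pos (pos hu) hv)
  · exact (saddle_level_splitting_general (neg hu).ne huv).2.2 (mul_neg_of_neg_of_pos (neg hu) hv)
  · exact (saddle_level_splitting_general (pos hu).ne' huv).2.2 (mul_neg_of_pos_of_neg (pos hu) hv)
  · exact (saddle_level_splitting_general (neg hu).ne huv).1.2 (mul_pos_of_neg_of_neg (neg hu) hv)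
end

section
/- Fix ε > 0 and let H_desing(u, q; 1) = −q²/2 + ε(u⁴/4 − u³/3 − u²/2 + u) (the Hamiltonian of the desingularized reduced system at a = 1). Then H_desing(1, 0; 1) = 5ε/12, and for all real u, q: H_desing(u, q; 1) − 5ε/12 = −q²/2 + (ε/12)(u − 1)³(3u + 5). Consequently, the level set {H_desing(·,·;1) = 5ε/12} through the cusp point (1, 0) of the reduced flow is exactly the set {q² = (ε/6)(u − 1)³(3u + 5)}; in particular, for u ≥ 1 it consists of the two curve branches q = ±√(ε/6)·(u − 1)^{3/2}·√(3u + 5), which are the one-branched local stable and unstable manifolds of the RFSN-II point (1, 0). -/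
/-!
For every `a` the Hamiltonian is `-q² / 2` plus a quartic polynomial in `u` which has a critical
point at `u = 1`, so that subtracting its value there leaves a factor `(u - 1)²`. The cofactor
`3 (u + 1)² - 4 a (u + 2)` takes the value `12 (1 - a)` at `u = 1`, so exactly for `a = 1` the root
`u = 1` becomes triple. The level set through `(1, 0)` is then `q² = (ε / 6) (u - 1)³ (3 u + 5)`,
whose right-hand side is, for `u ≥ 1`, a product of nonnegative factors with explicit square roots.
-/

/-- The first integral `H_desing(u, q; a)` of the desingularized reduced system
`u' = q`, `q' = ε (u² - 1) (u - a)`, with `ε` and `a` as the first two arguments. -/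
noncomputable def desingHamiltonian (ε a u q : ℝ) : ℝ :=
  -(q ^ 2) / 2 + ε * (u ^ 4 / 4 - a * u ^ 3 / 3 - u ^ 2 / 2 + a * u)

section LevelSet

variable (ε a u q : ℝ)

theorem desingHamiltonian_one_zero :
    desingHamiltonian ε a 1 0 = ε * (8 * a - 3) / 12 := by
  unfold desingHamiltonian
  ring

theorem desingHamiltonian_sub_one_zero :
    desingHamiltonian ε a u q - desingHamiltonian ε a 1 0 =
      -(q ^ 2) / 2 + ε / 12 * (u - 1) ^ 2 * (3 * (u + 1) ^ 2 - 4 * a * (u + 2)) := by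
  unfold desingHamiltonian
  ring

theorem desingHamiltonian_cusp : desingHamiltonian ε 1 1 0 = 5 * ε / 12 := by
  rw [desingHamiltonian_one_zero]
  ring

theorem desingHamiltonian_sub_cusp :
    desingHamiltonian ε 1 u q - 5 * ε / 12 =
      -(q ^ 2) / 2 + ε / 12 * (u - 1) ^ 3 * (3 * u + 5) := by
  have triple_root : (u - 1) ^ 2 * (3 * (u + 1) ^ 2 - 4 * 1 * (u + 2)) =
      (u - 1) ^ 3 * (3 * u + 5) := by ring
  rw [← desingHamiltonian_cusp, desingHamiltonian_sub_one_zero, mul_assoc, triple_root,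
    ← mul_assoc]

theorem desingHamiltonian_eq_cusp_iff :
    desingHamiltonian ε 1 u q = 5 * ε / 12 ↔
      q ^ 2 = ε / 6 * (u - 1) ^ 3 * (3 * u + 5) := by
  rw [← sub_eq_zero, desingHamiltonian_sub_cusp]
  constructor <;> intro h <;> linarith

end LevelSet

theorem sq_mul_sqrt_self {x : ℝ} (hx : 0 ≤ x) : (x * √x) ^ 2 = x ^ 3 := by
  rw [mul_pow, Real.sq_sqrt hx, ← pow_succ]

theorem sq_eq_mul_cube_mul_iff {c x y : ℝ} (hc : 0 ≤ c) (hx : 0 ≤ x) (hy : 0 ≤ y) (q : ℝ) :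
    q ^ 2 = c * x ^ 3 * y ↔ q = √c * (x * √x) * √y ∨ q = -(√c * (x * √x) * √y) := by
  have sq_branch : (√c * (x * √x) * √y) ^ 2 = c * x ^ 3 * y := by
    rw [mul_pow, mul_pow, Real.sq_sqrt hc, sq_mul_sqrt_self hx, Real.sq_sqrt hy]
  rw [← sq_branch, sq_eq_sq_iff_eq_or_eq_neg]

/-- At `a = 1`, the Hamiltonian `H(u,q) = -q²/2 + ε(u⁴/4 - u³/3 - u²/2 + u)` of the
desingularized reduced system satisfies `H(1,0) = 5ε/12`,
`H(u,q) - 5ε/12 = -q²/2 + (ε/12)(u-1)³(3u+5)`; the level set through the cusp `(1,0)`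
is exactly `{q² = (ε/6)(u-1)³(3u+5)}`, and for `u ≥ 1` it consists of the two branches
`q = ±√(ε/6)·(u-1)^{3/2}·√(3u+5)`. -/
theorem cusp_level_set (ε : ℝ) (hε : 0 < ε) :
    let H : ℝ → ℝ → ℝ := fun u q =>
      -(q ^ 2) / 2 + ε * (u ^ 4 / 4 - u ^ 3 / 3 - u ^ 2 / 2 + u)
    H 1 0 = 5 * ε / 12 ∧
    (∀ u q : ℝ,
      H u q - 5 * ε / 12 = -(q ^ 2) / 2 + (ε / 12) * (u - 1) ^ 3 * (3 * u + 5)) ∧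
    {x : ℝ × ℝ | H x.1 x.2 = 5 * ε / 12}
      = {x : ℝ × ℝ | x.2 ^ 2 = (ε / 6) * (x.1 - 1) ^ 3 * (3 * x.1 + 5)} ∧
    (∀ u q : ℝ, 1 ≤ u →
      (H u q = 5 * ε / 12 ↔
        q = Real.sqrt (ε / 6) * ((u - 1) * Real.sqrt (u - 1)) * Real.sqrt (3 * u + 5) ∨
        q = -(Real.sqrt (ε / 6) * ((u - 1) * Real.sqrt (u - 1)) * Real.sqrt (3 * u + 5)))) := by
  intro H
  have hH : H = desingHamiltonian ε 1 := by
    funext u q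
    simp only [H, desingHamiltonian, one_mul]
  rw [hH]
  refine ⟨desingHamiltonian_cusp ε, desingHamiltonian_sub_cusp ε, ?_, fun u q hu => ?_⟩
  · ext x
    exact desingHamiltonian_eq_cusp_iff ε x.1 x.2
  · rw [desingHamiltonian_eq_cusp_iff]
    exact sq_eq_mul_cube_mul_iff (by positivity) (by linarith) (by linarith) q
end

section
/- Fix ε > 0 and define Γ₀ : ℝ → ℝ⁴ by Γ₀(y) = ( (√ε/12)y², y/6, (ε/144)y⁴ − 1/6, (√ε/36)y³ ). Then Γ₀ = (u, p, v, q) is an exact solution of the blown-up system u' = √ε p, p' = u² − v, v' = √ε q, q' = u (the r₂ = 0 system in the rescaling chart K₂), and Γ₀ lies in the zero level set of the Hamiltonian: H₂(Γ₀(y)) = 0 for all y ∈ ℝ, where H₂(u, p, v, q) = (√ε/2)(p² − q²) + u v − u³/3. The half-orbits Γ₀⁻ = Γ₀|_{y ≤ 0} and Γ₀⁺ = Γ₀|_{y ≥ 0} are, respectively, the true and faux singular canards of the RFSN-II singularity. -/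
/-! `Γ₀` satisfies the system by direct differentiation. The Hamiltonian is a first integral of the
system, so it is constant along `Γ₀`, and at `Γ₀(0) = (0, 0, -1/6, 0)` it vanishes. -/

namespace RescalingChart

section Field

variable {K : Type*} [Field K]

/-- The vector field of the blown-up system in the chart `K₂` at `r₂ = 0`, in the coordinates
`(u, p, v, q)`; the parameter `s` plays the role of `√ε`. -/
def vectorField (s : K) : K × K × K × K → K × K × K × K :=
  fun (u, p, v, q) => (s * p, u ^ 2 - v, s * q, u)

/-- The Hamiltonian `H₂` of the blown-up system at `r₂ = 0`, with `s` in place of `√ε`. -/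
def hamiltonian (s : K) : K × K × K × K → K :=
  fun (u, p, v, q) => s / 2 * (p ^ 2 - q ^ 2) + u * v - u ^ 3 / 3

/-- The curve `Γ₀` carrying the singular canards of the RFSN-II point, with `s` in place of `√ε`
and hence `s ^ 2` in place of `ε`. -/
def Gamma0 (s y : K) : K × K × K × K :=
  (s / 12 * y ^ 2, y / 6, s ^ 2 / 144 * y ^ 4 - 1 / 6, s / 36 * y ^ 3)

end Field

section Calculus

variable {𝕜 : Type*} [NontriviallyNormedField 𝕜]

theorem hasDerivAt_prod_iff {F G : Type*} [NormedAddCommGroup F] [NormedSpace 𝕜 F]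
    [NormedAddCommGroup G] [NormedSpace 𝕜 G] {f : 𝕜 → F × G} {f' : F × G} {y : 𝕜} :
    HasDerivAt f f' y ↔
      HasDerivAt (fun t => (f t).1) f'.1 y ∧ HasDerivAt (fun t => (f t).2) f'.2 y :=
  ⟨fun h => ⟨(hasFDerivAt_fst (𝕜 := 𝕜) (p := f y)).comp_hasDerivAt y h,
      (hasFDerivAt_snd (𝕜 := 𝕜) (p := f y)).comp_hasDerivAt y h⟩,
    fun h => h.1.prodMk h.2⟩

theorem hasDerivAt_vectorField_iff {s y : 𝕜} {γ : 𝕜 → 𝕜 × 𝕜 × 𝕜 × 𝕜} :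
    HasDerivAt γ (vectorField s (γ y)) y ↔
      HasDerivAt (fun t => (γ t).1) (s * (γ y).2.1) y ∧
      HasDerivAt (fun t => (γ t).2.1) ((γ y).1 ^ 2 - (γ y).2.2.1) y ∧
      HasDerivAt (fun t => (γ t).2.2.1) (s * (γ y).2.2.2) y ∧
      HasDerivAt (fun t => (γ t).2.2.2) (γ y).1 y := by
  simp only [hasDerivAt_prod_iff, vectorField]

variable [CharZero 𝕜]

theorem hasDerivAt_Gamma0 (s y : 𝕜) :
    HasDerivAt (Gamma0 s) (vectorField s (Gamma0 s y)) y := by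
  have hu := (hasDerivAt_pow 2 y).const_mul (s / 12)
  have hp := (hasDerivAt_id y).div_const 6
  have hv := ((hasDerivAt_pow 4 y).const_mul (s ^ 2 / 144)).sub_const (1 / 6)
  have hq := (hasDerivAt_pow 3 y).const_mul (s / 36)
  refine hasDerivAt_vectorField_iff.2 ⟨hu.congr_deriv ?_, hp.congr_deriv ?_,
    hv.congr_deriv ?_, hq.congr_deriv ?_⟩ <;>
  · simp only [Gamma0]
    push_cast
    ring

theorem hasDerivAt_hamiltonian_comp {s y : 𝕜} {γ : 𝕜 → 𝕜 × 𝕜 × 𝕜 × 𝕜}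
    (hγ : HasDerivAt γ (vectorField s (γ y)) y) :
    HasDerivAt (fun t => hamiltonian s (γ t)) 0 y := by
  obtain ⟨hu, hp, hv, hq⟩ := hasDerivAt_vectorField_iff.1 hγ
  have hH := ((((hp.pow 2).sub (hq.pow 2)).const_mul (s / 2)).add (hu.mul hv)).sub
    ((hu.pow 3).div_const 3)
  refine hH.congr_deriv ?_
  push_cast
  ring

end Calculus

variable {𝕜 : Type*} [RCLike 𝕜]

theorem hamiltonian_eq_of_hasDerivAt {s : 𝕜} {γ : 𝕜 → 𝕜 × 𝕜 × 𝕜 × 𝕜}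
    (hγ : ∀ y, HasDerivAt γ (vectorField s (γ y)) y) (y₁ y₂ : 𝕜) :
    hamiltonian s (γ y₁) = hamiltonian s (γ y₂) :=
  have hH y := hasDerivAt_hamiltonian_comp (hγ y)
  is_const_of_deriv_eq_zero (fun y => (hH y).differentiableAt) (fun y => (hH y).deriv) y₁ y₂

theorem hamiltonian_Gamma0 (s y : 𝕜) : hamiltonian s (Gamma0 s y) = 0 :=
  calc
    hamiltonian s (Gamma0 s y) = hamiltonian s (Gamma0 s 0) :=
      hamiltonian_eq_of_hasDerivAt (hasDerivAt_Gamma0 s) y 0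
    _ = 0 := by simp [hamiltonian, Gamma0]

end RescalingChart

open RescalingChart in
theorem Gamma0_algebraic_solution_general {𝕜 : Type*} [RCLike 𝕜] {s ε : 𝕜} (hs : s ^ 2 = ε) :
    let u : 𝕜 → 𝕜 := fun y => (s / 12) * y ^ 2
    let p : 𝕜 → 𝕜 := fun y => y / 6
    let v : 𝕜 → 𝕜 := fun y => (ε / 144) * y ^ 4 - 1 / 6
    let q : 𝕜 → 𝕜 := fun y => (s / 36) * y ^ 3
    (∀ y, HasDerivAt u (s * p y) y) ∧
    (∀ y, HasDerivAt p (u y ^ 2 - v y) y) ∧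
    (∀ y, HasDerivAt v (s * q y) y) ∧
    (∀ y, HasDerivAt q (u y) y) ∧
    (∀ y, (s / 2) * (p y ^ 2 - q y ^ 2) + u y * v y - u y ^ 3 / 3 = 0) := by
  subst hs
  have hΓ y := hasDerivAt_vectorField_iff.1 (hasDerivAt_Gamma0 s y)
  exact ⟨fun y => (hΓ y).1, fun y => (hΓ y).2.1, fun y => (hΓ y).2.2.1, fun y => (hΓ y).2.2.2,
    hamiltonian_Gamma0 s⟩

/-- The explicit algebraic curve
`Γ₀(y) = ((√ε/12)y², y/6, (ε/144)y⁴ - 1/6, (√ε/36)y³)` solves the blown-up system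
`u' = √ε p, p' = u² - v, v' = √ε q, q' = u` in the rescaling chart `K₂` at `r₂ = 0`,
and lies in the zero level set of the Hamiltonian
`H₂(u,p,v,q) = (√ε/2)(p² - q²) + uv - u³/3`. -/
theorem Gamma0_algebraic_solution (ε : ℝ) (hε : 0 < ε) :
    let u : ℝ → ℝ := fun y => (Real.sqrt ε / 12) * y ^ 2
    let p : ℝ → ℝ := fun y => y / 6
    let v : ℝ → ℝ := fun y => (ε / 144) * y ^ 4 - 1/6
    let q : ℝ → ℝ := fun y => (Real.sqrt ε / 36) * y ^ 3
    (∀ y, deriv u y = Real.sqrt ε * p y) ∧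
    (∀ y, deriv p y = u y ^ 2 - v y) ∧
    (∀ y, deriv v y = Real.sqrt ε * q y) ∧
    (∀ y, deriv q y = u y) ∧
    (∀ y, (Real.sqrt ε / 2) * (p y ^ 2 - q y ^ 2) + u y * v y - u y ^ 3 / 3 = 0) := by
  obtain ⟨hu, hp, hv, hq, hH⟩ := Gamma0_algebraic_solution_general (Real.sq_sqrt hε.le)
  exact ⟨fun y => (hu y).deriv, fun y => (hp y).deriv, fun y => (hv y).deriv,
    fun y => (hq y).deriv, hH⟩
end

section
/- Fix ε > 0 and let Γ₀(y) = (u₂(y), p₂(y), v₂(y), q₂(y)) = ( (√ε/12)y², y/6, (ε/144)y⁴ − 1/6, (√ε/36)y³ ). Define the chart-transition map (valid for u₂ > 0) by κ(u₂, p₂, v₂, q₂) = ( 1/u₂, p₂/u₂^{3/2}, v₂/u₂², q₂/u₂^{3/2} ). Then κ(Γ₀(y)) → (0, 0, 1, 2√3/(3ε^{1/4})) as y → +∞, and κ(Γ₀(y)) → (0, 0, 1, −2√3/(3ε^{1/4})) as y → −∞. Hence, in the entry/exit chart K₁ of the blow-up, the algebraic solution Γ₀ is forward asymptotic to the fixed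 point (δ₁, p₁, v₁, q₁) = (0, 0, 1, q⁺) and backward asymptotic to (0, 0, 1, q⁻) on the line ℓ of equilibria, where q^± = ±2√3/(3ε^{1/4}). -/
open Filter

/-!
The chart map `κ` sees the weighted dilation `(u, p, v, q) ↦ (r²u, r³p, r⁴v, r³q)` only through
`δ₁ = 1 / u`, which it divides by `r²`. Pulling the dilation by `y` out of `Γ₀(y)` leaves a curve
converging to `(√ε/12, 0, ε/144, √ε/36)` as `y → ∞`, so `κ(Γ₀(y))` converges to the value of `κ`
there with `δ₁` replaced by `0`. The limit at `-∞` is the mirror image under the reversor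
`(u, p, v, q) ↦ (u, -p, v, -q)`, which commutes with `κ` and sends `Γ₀(y)` to `Γ₀(-y)`.
-/

open scoped Topology

/-- The transition map `κ` from the rescaling chart `K₂` to the entry/exit chart `K₁` on
`{r₂ = 0}`, with `u ^ (3 / 2)` written as `u * √u`. It is meaningful only for `0 < u`. -/
noncomputable def entryChart (x : ℝ × ℝ × ℝ × ℝ) : ℝ × ℝ × ℝ × ℝ :=
  (1 / x.1, x.2.1 / (x.1 * √x.1), x.2.2.1 / x.1 ^ 2, x.2.2.2 / (x.1 * √x.1))

/-- The quasi-homogeneous dilation of `(u, p, v, q)`-space with the blow-up weights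
`(2, 3, 4, 3)`. -/
def weightedDilation (r : ℝ) (x : ℝ × ℝ × ℝ × ℝ) : ℝ × ℝ × ℝ × ℝ :=
  (r ^ 2 * x.1, r ^ 3 * x.2.1, r ^ 4 * x.2.2.1, r ^ 3 * x.2.2.2)

/-- The reversor `(u, p, v, q) ↦ (u, -p, v, -q)`, the time-reversing symmetry of the system;
the same formula serves in both charts. -/
def reversor (x : ℝ × ℝ × ℝ × ℝ) : ℝ × ℝ × ℝ × ℝ :=
  (x.1, -x.2.1, x.2.2.1, -x.2.2.2)

/-- The algebraic solution `Γ₀` of the `r₂ = 0` system, in the coordinates `(u₂, p₂, v₂, q₂)`. -/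
noncomputable def gamma0 (ε y : ℝ) : ℝ × ℝ × ℝ × ℝ :=
  (√ε / 12 * y ^ 2, y / 6, ε / 144 * y ^ 4 - 1 / 6, √ε / 36 * y ^ 3)

theorem continuousAt_entryChart {x : ℝ × ℝ × ℝ × ℝ} (hx : 0 < x.1) :
    ContinuousAt entryChart x := by
  have hx32 : x.1 * √x.1 ≠ 0 := by positivity
  unfold entryChart
  fun_prop (disch := first | assumption | positivity)

theorem entryChart_weightedDilation {r : ℝ} (hr : 0 < r) (x : ℝ × ℝ × ℝ × ℝ) :
    entryChart (weightedDilation r x) = ((entryChart x).1 / r ^ 2, (entryChart x).2) := by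
  have hsqrt : √(r ^ 2 * x.1) = r * √x.1 := by
    rw [Real.sqrt_mul (sq_nonneg r), Real.sqrt_sq hr.le]
  have hr32 : r ^ 2 * x.1 * (r * √x.1) = r ^ 3 * (x.1 * √x.1) := by ring
  have hr2 : (r ^ 2 * x.1) ^ 2 = r ^ 4 * x.1 ^ 2 := by ring
  simp only [entryChart, weightedDilation, hsqrt, hr32, hr2,
    mul_div_mul_left _ _ (pow_ne_zero _ hr.ne'), div_div, mul_comm x.1]

theorem tendsto_entryChart_weightedDilation {α : Type*} {l : Filter α} {r : α → ℝ}
    {x : α → ℝ × ℝ × ℝ × ℝ} {x₀ : ℝ × ℝ × ℝ × ℝ} (hr : Tendsto r l atTop)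
    (hx : Tendsto x l (𝓝 x₀)) (hx₀ : 0 < x₀.1) :
    Tendsto (fun t => entryChart (weightedDilation (r t) (x t))) l
      (𝓝 (0, (entryChart x₀).2)) := by
  have hchart : Tendsto (fun t => entryChart (x t)) l (𝓝 (entryChart x₀)) :=
    (continuousAt_entryChart hx₀).tendsto.comp hx
  have hsq : Tendsto (fun t => r t ^ 2) l atTop := (tendsto_pow_atTop two_ne_zero).comp hr
  refine ((hchart.fst_nhds.div_atTop hsq).prodMk_nhds hchart.snd_nhds).congr' ?_
  filter_upwards [hr.eventually_gt_atTop 0] with t ht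
  exact (entryChart_weightedDilation ht (x t)).symm

theorem entryChart_reversor (x : ℝ × ℝ × ℝ × ℝ) :
    entryChart (reversor x) = reversor (entryChart x) := by
  simp only [entryChart, reversor, neg_div]

theorem continuous_reversor : Continuous reversor := by
  unfold reversor
  fun_prop

theorem gamma0_neg (ε y : ℝ) : gamma0 ε (-y) = reversor (gamma0 ε y) := by
  ext <;> simp only [gamma0, reversor] <;> ring

theorem gamma0_eq_weightedDilation (ε : ℝ) {y : ℝ} (hy : y ≠ 0) :
    gamma0 ε y =
      weightedDilation y (√ε / 12, y⁻¹ ^ 2 / 6, ε / 144 - y⁻¹ ^ 4 / 6, √ε / 36) := by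
  ext <;> simp only [gamma0, weightedDilation] <;> field_simp

theorem sqrt_sqrt_eq_rpow {ε : ℝ} (hε : 0 ≤ ε) : √(√ε) = ε ^ ((1 : ℝ) / 4) := by
  rw [Real.sqrt_eq_rpow, Real.sqrt_eq_rpow, ← Real.rpow_mul hε]
  norm_num

theorem entryChart_gamma0_leading {ε : ℝ} (hε : 0 < ε) :
    (entryChart (√ε / 12, 0, ε / 144, √ε / 36)).2 =
      (0, 1, 2 * √3 / (3 * ε ^ ((1 : ℝ) / 4))) := by
  have hsqrt12 : √12 = 2 * √3 := by
    rw [show (12 : ℝ) = 2 ^ 2 * 3 by norm_num, Real.sqrt_mul (by positivity),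
      Real.sqrt_sq zero_le_two]
  have hsqrt : √(√ε / 12) = ε ^ ((1 : ℝ) / 4) / (2 * √3) := by
    rw [Real.sqrt_div' _ (by norm_num), sqrt_sqrt_eq_rpow hε.le, hsqrt12]
  have hv : ε / 144 / (√ε / 12) ^ 2 = 1 := by
    rw [div_pow, Real.sq_sqrt hε.le]
    field_simp
    norm_num
  have hq : √ε / 36 / (√ε / 12 * √(√ε / 12)) = 2 * √3 / (3 * ε ^ ((1 : ℝ) / 4)) := by
    rw [hsqrt]
    field_simp
    norm_num
  simp only [entryChart, zero_div, hv, hq]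

theorem tendsto_entryChart_gamma0_atTop {ε : ℝ} (hε : 0 < ε) :
    Tendsto (fun y => entryChart (gamma0 ε y)) atTop
      (𝓝 (0, 0, 1, 2 * √3 / (3 * ε ^ ((1 : ℝ) / 4)))) := by
  have hcont : Continuous fun z : ℝ => (√ε / 12, z ^ 2 / 6, ε / 144 - z ^ 4 / 6, √ε / 36) := by
    fun_prop
  have hleading : Tendsto
      (fun y : ℝ => (√ε / 12, y⁻¹ ^ 2 / 6, ε / 144 - y⁻¹ ^ 4 / 6, √ε / 36)) atTop
      (𝓝 (√ε / 12, 0, ε / 144, √ε / 36)) := by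
    simpa [Function.comp_def] using (hcont.tendsto 0).comp tendsto_inv_atTop_zero
  rw [← entryChart_gamma0_leading hε]
  refine (tendsto_entryChart_weightedDilation tendsto_id hleading (by positivity)).congr' ?_
  filter_upwards [eventually_ne_atTop 0] with y hy
  rw [gamma0_eq_weightedDilation ε hy, id]

theorem tendsto_entryChart_gamma0_atBot {ε : ℝ} (hε : 0 < ε) :
    Tendsto (fun y => entryChart (gamma0 ε y)) atBot
      (𝓝 (0, 0, 1, -(2 * √3 / (3 * ε ^ ((1 : ℝ) / 4))))) := by
  have hsymm : ∀ y, reversor (entryChart (gamma0 ε (-y))) = entryChart (gamma0 ε y) := fun y => by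
    rw [← entryChart_reversor, ← gamma0_neg, neg_neg]
  have hmirror : Tendsto (fun y => reversor (entryChart (gamma0 ε (-y)))) atBot
      (𝓝 (reversor (0, 0, 1, 2 * √3 / (3 * ε ^ ((1 : ℝ) / 4))))) :=
    (continuous_reversor.tendsto _).comp
      ((tendsto_entryChart_gamma0_atTop hε).comp tendsto_neg_atBot_atTop)
  simp only [hsymm] at hmirror
  simpa only [reversor, neg_zero] using hmirror

/-- Forward and backward asymptotics of the algebraic solution `Γ₀` in the entry/exit
chart `K₁`: with `κ(u,p,v,q) = (1/u, p/u^{3/2}, v/u², q/u^{3/2})`, the image of `Γ₀`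
tends to `(0, 0, 1, ±2√3/(3ε^{1/4}))` as `y → ±∞`, i.e. to the fixed points
`(0,0,1,q^±)` on the line `ℓ` of equilibria. -/
theorem Gamma0_asymptotics_K1 (ε : ℝ) (hε : 0 < ε) :
    let u : ℝ → ℝ := fun y => (Real.sqrt ε / 12) * y ^ 2
    let p : ℝ → ℝ := fun y => y / 6
    let v : ℝ → ℝ := fun y => (ε / 144) * y ^ 4 - 1/6
    let q : ℝ → ℝ := fun y => (Real.sqrt ε / 36) * y ^ 3
    let κ : ℝ → ℝ × ℝ × ℝ × ℝ := fun y =>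
      (1 / u y, p y / (u y * Real.sqrt (u y)), v y / (u y) ^ 2,
       q y / (u y * Real.sqrt (u y)))
    Tendsto κ atTop
        (nhds (0, 0, 1, 2 * Real.sqrt 3 / (3 * ε ^ ((1 : ℝ)/4)))) ∧
    Tendsto κ atBot
        (nhds (0, 0, 1, -(2 * Real.sqrt 3 / (3 * ε ^ ((1 : ℝ)/4))))) :=
  ⟨tendsto_entryChart_gamma0_atTop hε, tendsto_entryChart_gamma0_atBot hε⟩
end
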